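/- Let ψ : ℝ^n → ℝ be μ-strongly convex (μ > 0) and f_1, …, f_m : ℝ^n → ℝ convex and differentiable with L_i-Lipschitz gradients; L_max = max_i L_i. Fix x ∈ ℝ^n, x* ∈ ∂ψ(x), a subset J ⊆ {1,…,m}, weights w_i > 0 with ∑_{i∈J} w_i = 1, and suppose ∑_{i∈J} w_i‖∇f_i(x)‖² > 0. Set α = ∑_{i∈J} w_i ∇f_i(x), β = ⟨α, x⟩ − ∑_{i∈J}(w_i/L_i)‖∇f_i(x)‖², H = {z : ⟨α, z⟩ ≤ β}, and L_adapt = ‖α‖² / ∑_{i∈J} w_i‖∇f_i(x)‖². For any stepsize t ∈ (0, 2μ/(L_max·L_adapt)), define x⁺* = x* − t·α and x⁺ = ∇ψ*(x⁺*). Then for every z ∈ H: D_ψ^{x⁺*}(x⁺, z) ≤ D_ψ^{x*}(x, z) − ( t/L_max − (t²/(2μ))·L_adapt )·∑_{i∈J} w_i‖∇f_i(x)‖². -/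

import Mathlib

/-!
The stepped dual point `p = xs - t • α` is a subgradient of `ψ` at `x⁺ = ∇ψ*(p)`. Indeed `ψ - ⟨p, ·⟩`
is continuous and, by strong convexity at `x`, coercive, so it has a minimizer `y`
(`exists_isSubgrad`); and strong convexity at `y` squeezes `ψ*` near `p` between its affine
minorant of slope `y` and that minorant plus a quadratic, so `∇ψ*(p) = y`
(`gradient_fenchel_of_isSubgrad`).

Once `p ∈ ∂ψ(x⁺)` is known, strong convexity at `x` and Young's inequality give
`D(x⁺, z) ≤ D(x, z) + t ⟨α, z - x⟩ + t² ‖α‖² / (2μ)`. Membership of `z` in the halfspace bounds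
`⟨α, z - x⟩` by `-∑ (w_i / L_i) ‖∇f_i(x)‖² ≤ -(1 / L_max) ∑ w_i ‖∇f_i(x)‖²`.
-/

open MeasureTheory ProbabilityTheory RealInnerProductSpace
open scoped BigOperators

noncomputable section

/-- `xs` is a subgradient of `ψ` at `x`: `ψ(y) ≥ ψ(x) + ⟨xs, y - x⟩` for all `y`. -/
def IsSubgrad {n : ℕ} (ψ : EuclideanSpace ℝ (Fin n) → ℝ) (x xs : EuclideanSpace ℝ (Fin n)) : Prop :=
  ∀ y, ψ x + ⟪xs, y - x⟫ ≤ ψ y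

/-- Bregman distance `D_ψ^{xs}(x, y) = ψ(y) - ψ(x) - ⟨xs, y - x⟩`. -/
def Breg {n : ℕ} (ψ : EuclideanSpace ℝ (Fin n) → ℝ) (x xs y : EuclideanSpace ℝ (Fin n)) : ℝ :=
  ψ y - ψ x - ⟪xs, y - x⟫

/-- `ψ` is `α`-strongly convex:
`ψ(y) ≥ ψ(x) + ⟨xs, y - x⟩ + (α/2)‖y - x‖²` for all `x, y` and all subgradients `xs ∈ ∂ψ(x)`. -/
def SubgradStrongConvex {n : ℕ} (ψ : EuclideanSpace ℝ (Fin n) → ℝ) (α : ℝ) : Prop :=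
  ∀ x y xs, IsSubgrad ψ x xs → ψ x + ⟪xs, y - x⟫ + α / 2 * ‖y - x‖ ^ 2 ≤ ψ y

/-- Fenchel conjugate `ψ*(p) = sup_z (⟨p, z⟩ - ψ(z))`. -/
def fenchel {n : ℕ} (ψ : EuclideanSpace ℝ (Fin n) → ℝ) (p : EuclideanSpace ℝ (Fin n)) : ℝ :=
  ⨆ z, (⟪p, z⟫ - ψ z)

/-- `xhat` is the Bregman projection of `x` onto `C` w.r.t. `ψ` and the subgradient `xs`:
it belongs to `C` and minimizes `y ↦ D_ψ^{xs}(x, y)` over `C`. -/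
def IsBregProj {n : ℕ} (ψ : EuclideanSpace ℝ (Fin n) → ℝ) (x xs : EuclideanSpace ℝ (Fin n))
    (C : Set (EuclideanSpace ℝ (Fin n))) (xhat : EuclideanSpace ℝ (Fin n)) : Prop :=
  xhat ∈ C ∧ ∀ y ∈ C, Breg ψ x xs xhat ≤ Breg ψ x xs y

/-- The proximity objective `F(x) = (1/m) ∑_{i=1}^m f_i(x)`. -/
def Fobj {n m : ℕ} (f : Fin m → EuclideanSpace ℝ (Fin n) → ℝ) (v : EuclideanSpace ℝ (Fin n)) : ℝ :=
  (m : ℝ)⁻¹ * ∑ i, f i v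

/-- The set of (global) minimizers of `F = (1/m) ∑ f_i`. -/
def ArgminSet {n m : ℕ} (f : Fin m → EuclideanSpace ℝ (Fin n) → ℝ) :
    Set (EuclideanSpace ℝ (Fin n)) :=
  {z | ∀ y, Fobj f z ≤ Fobj f y}

/-- Squared Bregman distance from `z` (with subgradient `zs`) to a set `X`:
`inf_{w ∈ X} D_ψ^{zs}(z, w)`. -/
def distSq {n : ℕ} (ψ : EuclideanSpace ℝ (Fin n) → ℝ) (z zs : EuclideanSpace ℝ (Fin n))
    (X : Set (EuclideanSpace ℝ (Fin n))) : ℝ :=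
  ⨅ w : X, Breg ψ z zs (w : EuclideanSpace ℝ (Fin n))

/-- Young's inequality with parameter `μ`. -/
lemma inner_le_young {E : Type*} [NormedAddCommGroup E] [InnerProductSpace ℝ E]
    {μ : ℝ} (hμ : 0 < μ) (u v : E) :
    ⟪u, v⟫ ≤ ‖u‖ ^ 2 / (2 * μ) + μ / 2 * ‖v‖ ^ 2 := by
  have h := real_inner_le_norm u v
  have e : ‖u‖ ^ 2 / (2 * μ) + μ / 2 * ‖v‖ ^ 2 - ‖u‖ * ‖v‖
      = (‖u‖ - μ * ‖v‖) ^ 2 / (2 * μ) := by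
    field_simp
    ring
  have : 0 ≤ (‖u‖ - μ * ‖v‖) ^ 2 / (2 * μ) := by positivity
  linarith

/-- A strongly convex `ψ` with at least one subgradient has every vector as a subgradient
somewhere: `ψ - ⟨p, ·⟩` is coercive, and `p` is a subgradient at its minimizer. -/
lemma exists_isSubgrad {n : ℕ} {ψ : EuclideanSpace ℝ (Fin n) → ℝ} {μ : ℝ} (hμ : 0 < μ)
    (hψ : ConvexOn ℝ Set.univ ψ) (hsc : SubgradStrongConvex ψ μ)
    {x xs : EuclideanSpace ℝ (Fin n)} (hxs : IsSubgrad ψ x xs) (p : EuclideanSpace ℝ (Fin n)) :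
    ∃ y, IsSubgrad ψ y p := by
  have hcont : Continuous fun y => ψ y - ⟪p, y⟫ :=
    hψ.locallyLipschitz.continuous.sub (continuous_const.inner continuous_id)
  obtain ⟨y, hy⟩ := hcont.exists_forall_le' x (by
    -- Outside this ball the quadratic term of strong convexity at `x` dominates the linear one.
    filter_upwards [(isCompact_closedBall x (2 * ‖p - xs‖ / μ)).compl_mem_cocompact] with y hy
    have hd : 2 * ‖p - xs‖ / μ < ‖y - x‖ := by
      simpa [dist_eq_norm] using hy
    rw [div_lt_iff₀ hμ] at hd
    have h1 := hsc x y xs hxs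
    have h2 := real_inner_le_norm (p - xs) (y - x)
    have h3 : 2 * ‖p - xs‖ * ‖y - x‖ ≤ ‖y - x‖ * μ * ‖y - x‖ :=
      mul_le_mul_of_nonneg_right hd.le (norm_nonneg _)
    have h4 : ⟪p - xs, y - x⟫ = ⟪p, y⟫ - ⟪p, x⟫ - ⟪xs, y - x⟫ := by
      rw [inner_sub_left, inner_sub_right p]
    nlinarith)
  refine ⟨y, fun z => ?_⟩
  have := hy z
  rw [inner_sub_right]
  linarith

/-- The conjugate `ψ*` is differentiable at every subgradient `p ∈ ∂ψ(y)`, with gradient `y`: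
the error `ψ*(q) - ψ*(p) - ⟨y, q - p⟩` lies between `0` and `‖q - p‖² / (2μ)`. -/
lemma gradient_fenchel_of_isSubgrad {n : ℕ} {ψ : EuclideanSpace ℝ (Fin n) → ℝ} {μ : ℝ}
    (hμ : 0 < μ) (hsc : SubgradStrongConvex ψ μ)
    {y p : EuclideanSpace ℝ (Fin n)} (hp : IsSubgrad ψ y p) :
    gradient (fenchel ψ) p = y := by
  have hub : ∀ q z, ⟪q, z⟫ - ψ z ≤ ⟪q, y⟫ - ψ y + ‖q - p‖ ^ 2 / (2 * μ) := by
    intro q z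
    have h1 := hsc y z p hp
    have h2 := inner_le_young hμ (q - p) (z - y)
    have h3 : ⟪q - p, z - y⟫ = ⟪q, z⟫ - ⟪q, y⟫ - ⟪p, z - y⟫ := by
      rw [inner_sub_left, inner_sub_right q]
    linarith
  have hle : ∀ q, fenchel ψ q ≤ ⟪q, y⟫ - ψ y + ‖q - p‖ ^ 2 / (2 * μ) :=
    fun q => ciSup_le (hub q)
  have hge : ∀ q, ⟪q, y⟫ - ψ y ≤ fenchel ψ q :=
    fun q => le_ciSup (f := fun z => ⟪q, z⟫ - ψ z) ⟨_, Set.forall_mem_range.2 (hub q)⟩ y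
  have heq : fenchel ψ p = ⟪p, y⟫ - ψ y :=
    le_antisymm (by simpa using hle p) (hge p)
  apply HasGradientAt.gradient
  rw [hasGradientAt_iff_isLittleO]
  have hO : (fun q => fenchel ψ q - fenchel ψ p - ⟪y, q - p⟫) =O[nhds p]
      fun q => ‖q - p‖ ^ 2 := by
    refine Asymptotics.IsBigO.of_bound (1 / (2 * μ)) (Filter.Eventually.of_forall fun q => ?_)
    have h1 := hle q
    have h2 := hge q
    have h3 : ⟪y, q - p⟫ = ⟪q, y⟫ - ⟪p, y⟫ := by
      rw [real_inner_comm, inner_sub_left]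
    have h4 : 1 / (2 * μ) * ‖q - p‖ ^ 2 = ‖q - p‖ ^ 2 / (2 * μ) := by ring
    rw [Real.norm_of_nonneg (by linarith), Real.norm_of_nonneg (by positivity)]
    linarith
  exact hO.trans_isLittleO (Asymptotics.isLittleO_pow_sub_sub p one_lt_two)

/-- Basic descent lemma, part (a): for any stepsize
`t ∈ (0, 2μ/(L_max·L_adapt))` and every `z` in the separating halfspace `H`:
`D_ψ^{x⁺*}(x⁺, z) ≤ D_ψ^{xs}(x, z) − (t/L_max − (t²/(2μ))·L_adapt)·∑ w_i‖∇f_i(x)‖²`. -/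
theorem stmt8 {n m : ℕ} (ψ : EuclideanSpace ℝ (Fin n) → ℝ) (μ : ℝ) (hμ : 0 < μ)
    (hψconv : ConvexOn ℝ Set.univ ψ) (hsc : SubgradStrongConvex ψ μ)
    (f : Fin m → EuclideanSpace ℝ (Fin n) → ℝ)
    (hfconv : ∀ i, ConvexOn ℝ Set.univ (f i))
    (f' : Fin m → EuclideanSpace ℝ (Fin n) → EuclideanSpace ℝ (Fin n))
    (hdiff : ∀ i z, HasGradientAt (f i) (f' i z) z)
    (L : Fin m → ℝ) (hL : ∀ i, 0 < L i)
    (hlip : ∀ i z w, ‖f' i z - f' i w‖ ≤ L i * ‖z - w‖)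
    (Lmax : ℝ) (hm : 0 < m) (hLmax : Lmax = ⨆ i, L i)
    (x xs : EuclideanSpace ℝ (Fin n)) (hxs : IsSubgrad ψ x xs)
    (J : Finset (Fin m)) (w : Fin m → ℝ)
    (hw : ∀ i ∈ J, 0 < w i) (hwsum : ∑ i ∈ J, w i = 1)
    (hpos : 0 < ∑ i ∈ J, w i * ‖f' i x‖ ^ 2)
    (t : ℝ) (htpos : 0 < t)
    (htlt : t < 2 * μ /
      (Lmax * (‖∑ i ∈ J, w i • f' i x‖ ^ 2 / ∑ i ∈ J, w i * ‖f' i x‖ ^ 2))) :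
    ∀ z, (⟪∑ i ∈ J, w i • f' i x, z⟫ ≤
        ⟪∑ i ∈ J, w i • f' i x, x⟫ - ∑ i ∈ J, w i / L i * ‖f' i x‖ ^ 2) →
      Breg ψ (gradient (fenchel ψ) (xs - t • ∑ i ∈ J, w i • f' i x))
          (xs - t • ∑ i ∈ J, w i • f' i x) z ≤
        Breg ψ x xs z -
          (t / Lmax - t ^ 2 / (2 * μ) *
            (‖∑ i ∈ J, w i • f' i x‖ ^ 2 / ∑ i ∈ J, w i * ‖f' i x‖ ^ 2)) *
          ∑ i ∈ J, w i * ‖f' i x‖ ^ 2 := by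
  intro z hz
  set α := ∑ i ∈ J, w i • f' i x with hα
  set S := ∑ i ∈ J, w i * ‖f' i x‖ ^ 2 with hS
  obtain ⟨y, hy⟩ := exists_isSubgrad hμ hψconv hsc hxs (xs - t • α)
  rw [gradient_fenchel_of_isSubgrad hμ hsc hy]
  have hle : ∀ i, L i ≤ Lmax := fun i => hLmax ▸ le_ciSup (Set.finite_range L).bddAbove i
  have hsum : S / Lmax ≤ ∑ i ∈ J, w i / L i * ‖f' i x‖ ^ 2 := by
    rw [hS, Finset.sum_div]
    refine Finset.sum_le_sum fun i hi => ?_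
    have h1 : w i / Lmax ≤ w i / L i := div_le_div_of_nonneg_left (hw i hi).le (hL i) (hle i)
    calc w i * ‖f' i x‖ ^ 2 / Lmax = w i / Lmax * ‖f' i x‖ ^ 2 := by ring
      _ ≤ _ := mul_le_mul_of_nonneg_right h1 (by positivity)
  have hstrong := hsc x y xs hxs
  have hyoung := inner_le_young hμ (t • α) (x - y)
  rw [norm_smul, mul_pow, Real.norm_eq_abs, sq_abs, norm_sub_rev x y, inner_smul_left,
    inner_sub_right] at hyoung
  have hstep := mul_le_mul_of_nonneg_left (hz.trans (sub_le_sub_left hsum _)) htpos.le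
  have hcancel : (t / Lmax - t ^ 2 / (2 * μ) * (‖α‖ ^ 2 / S)) * S
      = t * (S / Lmax) - t ^ 2 * ‖α‖ ^ 2 / (2 * μ) := by
    field_simp
  rw [hcancel]
  simp only [Breg, inner_sub_left, inner_sub_right, inner_smul_left, conj_trivial] at *
  linarith
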